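/- arXiv:2010.07691 — 2 statements merged into one kernel-verified Lean document; each statement's English description precedes it below -/
import Mathlib

section
/- Let n ≥ 1, m ≥ 0, and let H₀, H₁, …, H_m : ℝⁿ × ℝⁿ → ℝ be twice continuously differentiable. Fix real numbers a₀, a₁, …, a_m (representing the time step Δt and the noise increments ΔL¹, …, ΔLᵐ). Let U ⊆ ℝⁿ × ℝⁿ be open and let φ : U → ℝⁿ × ℝⁿ be a continuously differentiable map such that for every (p,q) ∈ U, writing φ(p,q) = (P,Q), the semi-implicit symplectic Euler relations hold: P = p − Σ_{i=0}^{m} a_i ∂H_i/∂q (P, q) and Q = q + Σ_{i=0}^{m} a_i ∂H_i/∂p (P, q). Then for every (p,q) ∈ U the Jacobian matrix Dφ(p,q) is symplectic, i.e. Dφ(p,q)ᵀ J Dφ(p,q) = J; equivalently, the map φ preserves the canonical symplectic two-form dp ∧ dq. -/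
theorem sum_apply_basis {n : ℕ} (l : (Fin n → ℝ) →L[ℝ] ℝ) (w : Fin n → ℝ) :
    ∑ j, w j * l (Pi.single j 1) = l w := by
  conv_rhs => rw [pi_eq_sum_univ' w]
  rw [map_sum]
  refine Finset.sum_congr rfl fun j _ => ?_
  rw [map_smul, smul_eq_mul]


/-- The semi-implicit (symplectic) Euler map
`(p, q) ↦ (P, Q)` defined implicitly by
`P = p − Σᵢ aᵢ ∂Hᵢ/∂q (P, q)` and `Q = q + Σᵢ aᵢ ∂Hᵢ/∂p (P, q)`
has a symplectic Jacobian at every point of the open set `U`: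
`Dφ(x)ᵀ J Dφ(x) = J`, expressed here as the invariance of the canonical
symplectic bilinear form `ω(u, v) = Σⱼ (u₁ⱼ v₂ⱼ − u₂ⱼ v₁ⱼ)` under `Dφ(x)`. -/
theorem semi_implicit_euler_symplectic
    (n m : ℕ) (hn : 1 ≤ n)
    (H : Fin (m + 1) → (Fin n → ℝ) × (Fin n → ℝ) → ℝ)
    (hH : ∀ i, ContDiff ℝ 2 (H i))
    (a : Fin (m + 1) → ℝ)
    (U : Set ((Fin n → ℝ) × (Fin n → ℝ))) (hU : IsOpen U)
    (φ : (Fin n → ℝ) × (Fin n → ℝ) → (Fin n → ℝ) × (Fin n → ℝ))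
    (hφ : ContDiffOn ℝ 1 φ U)
    (hrel : ∀ x ∈ U,
      (∀ j : Fin n, (φ x).1 j =
        x.1 j - ∑ i, a i *
          fderiv ℝ (fun y : Fin n → ℝ => H i ((φ x).1, y)) x.2 (Pi.single j 1)) ∧
      (∀ j : Fin n, (φ x).2 j =
        x.2 j + ∑ i, a i *
          fderiv ℝ (fun y : Fin n → ℝ => H i (y, x.2)) (φ x).1 (Pi.single j 1))) :
    ∀ x ∈ U, ∀ u v : (Fin n → ℝ) × (Fin n → ℝ),
      ∑ j, ((fderiv ℝ φ x u).1 j * (fderiv ℝ φ x v).2 j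
            - (fderiv ℝ φ x u).2 j * (fderiv ℝ φ x v).1 j)
        = ∑ j, (u.1 j * v.2 j - u.2 j * v.1 j) := by
  intro x hx u v
  set G : (Fin n → ℝ) × (Fin n → ℝ) → ℝ := fun z => ∑ i, a i * H i z with hG
  have hGc : ContDiff ℝ 2 G := by
    rw [hG]
    exact ContDiff.sum fun i _ => contDiff_const.mul (hH i)
  have hHd : ∀ i, Differentiable ℝ (H i) := fun i => (hH i).differentiable (by norm_num)
  have hGd : ∀ z, HasFDerivAt G (∑ i, a i • fderiv ℝ (H i) z) z := by
    intro z
    exact HasFDerivAt.fun_sum fun i _ => ((hHd i z).hasFDerivAt.const_mul (a i))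
  have hq : ∀ (P q e : Fin n → ℝ) (i),
      fderiv ℝ (fun y : Fin n → ℝ => H i (P, y)) q e = fderiv ℝ (H i) (P, q) (0, e) := by
    intro P q e i
    have h := (hHd i (P, q)).hasFDerivAt.comp q (hasFDerivAt_prodMk_right P q)
    have h' : HasFDerivAt (fun y : Fin n → ℝ => H i (P, y)) _ q := h
    rw [h'.fderiv]
    simp
  have hp : ∀ (P q e : Fin n → ℝ) (i),
      fderiv ℝ (fun y : Fin n → ℝ => H i (y, q)) P e = fderiv ℝ (H i) (P, q) (e, 0) := by
    intro P q e i
    have h := HasFDerivAt.comp (f := fun y : Fin n → ℝ => (y, q)) P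
      (hHd i (P, q)).hasFDerivAt (hasFDerivAt_prodMk_left P q)
    have h' : HasFDerivAt (fun y : Fin n → ℝ => H i (y, q)) _ P := h
    rw [h'.fderiv]
    simp
  have hrel1 : ∀ y ∈ U, ∀ j, (φ y).1 j = y.1 j - fderiv ℝ G ((φ y).1, y.2) (0, Pi.single j 1) := by
    intro y hy j
    rw [(hrel y hy).1 j, (hGd _).fderiv]
    simp [hq]
  have hrel2 : ∀ y ∈ U, ∀ j, (φ y).2 j = y.2 j + fderiv ℝ G ((φ y).1, y.2) (Pi.single j 1, 0) := by
    intro y hy j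
    rw [(hrel y hy).2 j, (hGd _).fderiv]
    simp [hp]
  have hUx : U ∈ nhds x := hU.mem_nhds hx
  have hL : HasFDerivAt φ (fderiv ℝ φ x) x :=
    ((hφ.contDiffAt hUx).differentiableAt (by norm_num)).hasFDerivAt
  set L := fderiv ℝ φ x with hLdef
  set b := fderiv ℝ (fderiv ℝ G) ((φ x).1, x.2) with hb
  have hsymm : ∀ α β, b α β = b β α := by
    have h : IsSymmSndFDerivAt ℝ G ((φ x).1, x.2) :=
      hGc.contDiffAt.isSymmSndFDerivAt (by simp)
    intro α β
    exact h α β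
  have hG1 : HasFDerivAt (fderiv ℝ G) b ((φ x).1, x.2) :=
    (((hGc.fderiv_right (m := 1) (by norm_num)).differentiable (by norm_num)) _).hasFDerivAt
  have hz : HasFDerivAt (fun y : (Fin n → ℝ) × (Fin n → ℝ) => ((φ y).1, y.2))
      (((ContinuousLinearMap.fst ℝ _ _).comp L).prod (ContinuousLinearMap.snd ℝ _ _)) x :=
    hL.fst.prodMk hasFDerivAt_snd
  have hcomp : ∀ e, HasFDerivAt (fun y => fderiv ℝ G ((φ y).1, y.2) e)
      ((ContinuousLinearMap.apply ℝ ℝ e).comp (b.comp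
        (((ContinuousLinearMap.fst ℝ _ _).comp L).prod (ContinuousLinearMap.snd ℝ _ _)))) x := by
    intro e
    have h1 := HasFDerivAt.comp (f := fun y : (Fin n → ℝ) × (Fin n → ℝ) => ((φ y).1, y.2)) x hG1 hz
    exact (ContinuousLinearMap.apply ℝ ℝ e).hasFDerivAt.comp x h1
  have e1 : ∀ w j, (L w).1 j = w.1 j - b ((L w).1, w.2) (0, Pi.single j 1) := by
    intro w j
    have hl := (hasFDerivAt_pi'.1 hL.fst) j
    have hr := ((hasFDerivAt_pi'.1 (hasFDerivAt_fst (𝕜 := ℝ) (p := x))) j).sub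
      (hcomp (0, Pi.single j 1))
    have heq := hl.unique (hr.congr_of_eventuallyEq
      (Filter.eventually_of_mem hUx fun y hy => hrel1 y hy j))
    simpa using congrArg (fun T => T w) heq
  have e2 : ∀ w j, (L w).2 j = w.2 j + b ((L w).1, w.2) (Pi.single j 1, 0) := by
    intro w j
    have hl := (hasFDerivAt_pi'.1 hL.snd) j
    have hr := ((hasFDerivAt_pi'.1 (hasFDerivAt_snd (𝕜 := ℝ) (p := x))) j).add
      (hcomp (Pi.single j 1, 0))
    have heq := hl.unique (hr.congr_of_eventuallyEq
      (Filter.eventually_of_mem hUx fun y hy => hrel2 y hy j))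
    simpa using congrArg (fun T => T w) heq
  have s1 : ∀ α w, ∑ j, w j * b α (Pi.single j 1, 0) = b α (w, 0) := by
    intro α w
    simpa using sum_apply_basis ((b α).comp (ContinuousLinearMap.inl ℝ _ _)) w
  have s2 : ∀ α w, ∑ j, w j * b α (0, Pi.single j 1) = b α (0, w) := by
    intro α w
    simpa using sum_apply_basis ((b α).comp (ContinuousLinearMap.inr ℝ _ _)) w
  have key : ∀ j, (L u).1 j * (L v).2 j - (L u).2 j * (L v).1 j =
      (u.1 j * v.2 j - u.2 j * v.1 j)
      - v.2 j * b ((L u).1, u.2) (0, Pi.single j 1)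
      + (L u).1 j * b ((L v).1, v.2) (Pi.single j 1, 0)
      + u.2 j * b ((L v).1, v.2) (0, Pi.single j 1)
      - (L v).1 j * b ((L u).1, u.2) (Pi.single j 1, 0) := by
    intro j
    have a1 := e1 u j
    have a2 := e1 v j
    rw [e2 u j, e2 v j]
    linear_combination v.2 j * a1 - u.2 j * a2
  rw [Finset.sum_congr rfl fun j _ => key j, Finset.sum_sub_distrib, Finset.sum_add_distrib,
    Finset.sum_add_distrib, Finset.sum_sub_distrib, s1, s1, s2, s2]
  have d : ∀ α (p q : Fin n → ℝ), b α (p, q) = b α (p, 0) + b α (0, q) := by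
    intro α p q
    rw [← map_add]
    simp
  have hs := hsymm ((L u).1, u.2) ((L v).1, v.2)
  rw [d _ (L v).1 v.2, d _ (L u).1 u.2] at hs
  linear_combination -hs
end

section
/- Let c ∈ ℝ with |c| < 2, and let (P_j, Q_j)_{j≥0} satisfy the symplectic Euler recursion P_{j+1} = P_j − c Q_j, Q_{j+1} = Q_j + c P_{j+1}. Then for every N ≥ 0, P_N² + Q_N² ≤ ((2 + |c|)/(2 − |c|)) (P_0² + Q_0²). In particular, the numerical Hamiltonian P_N² + Q_N² remains bounded uniformly in N, oscillating within a factor of its initial value. -/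
/-- for `|c| < 2`, the symplectic Euler recursion
`P_{j+1} = P_j − c Q_j`, `Q_{j+1} = Q_j + c P_{j+1}` keeps the numerical
Hamiltonian uniformly bounded:
`P_N² + Q_N² ≤ ((2 + |c|)/(2 − |c|)) (P_0² + Q_0²)` for every `N`. -/
theorem symplectic_euler_hamiltonian_bounded
    (c : ℝ) (hc : |c| < 2) (P Q : ℕ → ℝ)
    (hP : ∀ j, P (j + 1) = P j - c * Q j)
    (hQ : ∀ j, Q (j + 1) = Q j + c * P (j + 1)) :
    ∀ N, P N ^ 2 + Q N ^ 2 ≤ ((2 + |c|) / (2 - |c|)) * (P 0 ^ 2 + Q 0 ^ 2) := by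
  intro N
  have hG : ∀ n, P n ^ 2 + Q n ^ 2 - c * P n * Q n = P 0 ^ 2 + Q 0 ^ 2 - c * P 0 * Q 0 := by
    intro n
    induction n with
    | zero => rfl
    | succ k ih =>
      rw [← ih, hQ k, hP k]
      ring
  have key : ∀ p q : ℝ, |c * p * q| ≤ |c| / 2 * (p ^ 2 + q ^ 2) := by
    intro p q
    rw [mul_assoc, abs_mul, abs_mul]
    have h : |p| * |q| ≤ (p ^ 2 + q ^ 2) / 2 := by
      nlinarith [sq_nonneg (|p| - |q|), sq_abs p, sq_abs q]
    nlinarith [mul_le_mul_of_nonneg_left h (abs_nonneg c)]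
  have h1 := (abs_le.mp (key (P N) (Q N))).2
  have h2 := (abs_le.mp (key (P 0) (Q 0))).1
  have h3 := hG N
  have hpos : 0 < 2 - |c| := by linarith
  rw [div_mul_eq_mul_div, le_div_iff₀ hpos]
  linarith
end
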